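/- A multipartite pure quantum state, i.e., a unit vector $\psi \in H_1 \otimes \cdots \otimes H_k$ (each $H_i \cong \mathbb{C}^{d_i}$ with the Euclidean norm, $\|\psi\|_2 = 1$), is separable (equal to a product tensor $\psi_1 \otimes \cdots \otimes \psi_k$) if and only if its injective and projective tensor norms both equal $1$: $\|\psi\|_\epsilon = \|\psi\|_\pi = 1$. -/

import Mathlib

/-- The simple (product) tensor `x¹ ⊗ ⋯ ⊗ xᵏ` of a family of vectors `x i ∈ ℂ^{d i}`,
realized as the multi-dimensional array `j ↦ ∏ i, x i (j i)` in the Hilbert space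
`H₁ ⊗ ⋯ ⊗ H_k ≅ ℂ^{∏ d i}`. -/
noncomputable def eTprod {k : ℕ} {d : Fin k → ℕ} (x : Π i, EuclideanSpace ℂ (Fin (d i))) :
    EuclideanSpace ℂ (Π i, Fin (d i)) :=
  (WithLp.equiv 2 _).symm fun j => ∏ i, x i (j i)

/-- The projective tensor norm on `H₁ ⊗ ⋯ ⊗ H_k` (each factor `ℓ₂^{d i}`). -/
noncomputable def projNormE {k : ℕ} {d : Fin k → ℕ}
    (T : EuclideanSpace ℂ (Π i, Fin (d i))) : ℝ :=
  sInf {s | ∃ (r : ℕ) (x : Fin r → Π i, EuclideanSpace ℂ (Fin (d i))),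
    T = ∑ j, eTprod (x j) ∧ s = ∑ j, ∏ i, ‖x j i‖}

/-- The injective tensor norm on `H₁ ⊗ ⋯ ⊗ H_k` (each factor `ℓ₂^{d i}`):
the supremum of `|⟨α¹ ⊗ ⋯ ⊗ αᵏ, T⟩|` over families of vectors in the unit balls. -/
noncomputable def injNormE {k : ℕ} {d : Fin k → ℕ}
    (T : EuclideanSpace ℂ (Π i, Fin (d i))) : ℝ :=
  sSup {s | ∃ a : Π i, EuclideanSpace ℂ (Fin (d i)),
    (∀ i, ‖a i‖ ≤ 1) ∧ s = ‖(inner ℂ (eTprod a) T : ℂ)‖}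

theorem eTprod_apply_aux {k : ℕ} {d : Fin k → ℕ} (x : Π i, EuclideanSpace ℂ (Fin (d i)))
    (j : Π i, Fin (d i)) : eTprod x j = ∏ i, x i (j i) := rfl

theorem norm_eTprod_aux {k : ℕ} {d : Fin k → ℕ} (x : Π i, EuclideanSpace ℂ (Fin (d i))) :
    ‖eTprod x‖ = ∏ i, ‖x i‖ := by
  have h : ‖eTprod x‖ ^ 2 = (∏ i, ‖x i‖) ^ 2 := by
    rw [EuclideanSpace.norm_sq_eq, ← Finset.prod_pow]
    simp only [EuclideanSpace.norm_sq_eq, eTprod_apply_aux, norm_prod, ← Finset.prod_pow]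
    rw [Finset.prod_univ_sum, Fintype.piFinset_univ]
  exact (pow_left_inj₀ (norm_nonneg _) (Finset.prod_nonneg fun i _ => norm_nonneg _)
    two_ne_zero).1 h

theorem eTprod_smul_aux {k : ℕ} {d : Fin k → ℕ} (c : Fin k → ℂ)
    (x : Π i, EuclideanSpace ℂ (Fin (d i))) :
    eTprod (fun i => c i • x i) = (∏ i, c i) • eTprod x := by
  ext j
  simp [eTprod_apply_aux, Finset.prod_mul_distrib]

theorem continuous_eTprod_aux {k : ℕ} {d : Fin k → ℕ} :
    Continuous (eTprod : (Π i, EuclideanSpace ℂ (Fin (d i))) → _) := by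
  refine (PiLp.continuous_toLp 2 _).comp ?_
  fun_prop

theorem inner_bound_aux {k : ℕ} {d : Fin k → ℕ}
    (ψ : EuclideanSpace ℂ (Π i, Fin (d i))) (hψ : ‖ψ‖ = 1)
    (a : Π i, EuclideanSpace ℂ (Fin (d i))) (ha : ∀ i, ‖a i‖ ≤ 1) :
    ‖(inner ℂ (eTprod a) ψ : ℂ)‖ ≤ 1 := by
  refine (norm_inner_le_norm _ _).trans ?_
  rw [hψ, mul_one, norm_eTprod_aux]
  exact Finset.prod_le_one (fun i _ => norm_nonneg _) fun i _ => ha i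

theorem inj_attained_aux {k : ℕ} {d : Fin k → ℕ}
    (ψ : EuclideanSpace ℂ (Π i, Fin (d i))) :
    ∃ a : Π i, EuclideanSpace ℂ (Fin (d i)),
      (∀ i, ‖a i‖ ≤ 1) ∧ injNormE ψ = ‖(inner ℂ (eTprod a) ψ : ℂ)‖ := by
  have hK : IsCompact (Set.univ.pi fun i : Fin k =>
      Metric.closedBall (0 : EuclideanSpace ℂ (Fin (d i))) 1) :=
    isCompact_univ_pi fun i => isCompact_closedBall _ _
  have hc : Continuous fun a : Π i, EuclideanSpace ℂ (Fin (d i)) =>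
      ‖(inner ℂ (eTprod a) ψ : ℂ)‖ :=
    (continuous_eTprod_aux.inner continuous_const).norm
  obtain ⟨a, ha, h, -⟩ := hK.exists_sSup_image_eq_and_ge ⟨fun _ => 0, by simp⟩ hc.continuousOn
  refine ⟨a, fun i => by simpa using ha i (Set.mem_univ i), ?_⟩
  rw [← h, injNormE]
  congr 1
  ext s
  simp [Set.mem_pi, eq_comm]

theorem sep_of_smul_aux {k : ℕ} {d : Fin k → ℕ}
    (ψ : EuclideanSpace ℂ (Π i, Fin (d i))) (hψ : ‖ψ‖ = 1) (hp : projNormE ψ = 1)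
    (c : ℂ) (a : Π i, EuclideanSpace ℂ (Fin (d i))) (h : ψ = c • eTprod a) :
    ∃ x : Π i, EuclideanSpace ℂ (Fin (d i)), ψ = eTprod x := by
  rcases k with _ | k
  · have hne : {s | ∃ (r : ℕ) (x : Fin r → Π i, EuclideanSpace ℂ (Fin (d i))),
        ψ = ∑ j, eTprod (x j) ∧ s = ∑ j, ∏ i, ‖x j i‖}.Nonempty := by
      by_contra hne
      rw [Set.not_nonempty_iff_eq_empty] at hne
      rw [projNormE, hne, Real.sInf_empty] at hp
      exact zero_ne_one hp
    obtain ⟨s, r, x, hx, -⟩ := hne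
    have hxa : ∀ j, eTprod (x j) = eTprod a := fun j => by
      congr 1
      exact Subsingleton.elim _ _
    simp only [hxa, Finset.sum_const, Finset.card_univ, Fintype.card_fin] at hx
    have hr : (r : ℝ) = 1 := by
      rw [hx, ← Nat.cast_smul_eq_nsmul ℂ, norm_smul, norm_eTprod_aux] at hψ
      simpa using hψ
    have hr' : r = 1 := by exact_mod_cast hr
    exact ⟨a, by simpa [hr'] using hx⟩
  · refine ⟨fun i => (if i = 0 then c else 1) • a i, ?_⟩
    rw [eTprod_smul_aux (fun i => if i = 0 then c else 1), h]
    simp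

theorem pure_separable_iff_norms_eq_one {k : ℕ} {d : Fin k → ℕ}
    (ψ : EuclideanSpace ℂ (Π i, Fin (d i))) (hψ : ‖ψ‖ = 1) :
    (∃ x : Π i, EuclideanSpace ℂ (Fin (d i)), ψ = eTprod x) ↔
      (injNormE ψ = 1 ∧ projNormE ψ = 1) := by
  constructor
  · rintro ⟨x, hx⟩
    have hprod : ∏ i, ‖x i‖ = 1 := by rw [← norm_eTprod_aux, ← hx, hψ]
    constructor
    · refine IsGreatest.csSup_eq ⟨⟨fun i => ((‖x i‖⁻¹ : ℝ) : ℂ) • x i, fun i => ?_, ?_⟩, ?_⟩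
      · rw [norm_smul, Complex.norm_real, norm_inv, norm_norm]
        exact inv_mul_le_one
      · rw [eTprod_smul_aux (fun i => ((‖x i‖⁻¹ : ℝ) : ℂ)), ← hx, ← Complex.ofReal_prod,
          Finset.prod_inv_distrib, hprod]
        simp [inner_self_eq_norm_sq_to_K, hψ]
      · rintro s ⟨a, ha, rfl⟩
        exact inner_bound_aux ψ hψ a ha
    · refine IsLeast.csInf_eq ⟨⟨1, fun _ => x, by simpa using hx, by simp [hprod]⟩, ?_⟩
      rintro s ⟨r, y, hy, rfl⟩
      rw [← hψ, hy]
      refine (norm_sum_le _ _).trans (le_of_eq ?_)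
      simp only [norm_eTprod_aux]
  · rintro ⟨hi, hp⟩
    obtain ⟨a, ha, h⟩ := inj_attained_aux ψ
    rw [hi] at h
    have he : ‖eTprod a‖ ≤ 1 := by
      rw [norm_eTprod_aux]
      exact Finset.prod_le_one (fun i _ => norm_nonneg _) fun i _ => ha i
    have hcs : ‖(inner ℂ (eTprod a) ψ : ℂ)‖ ≤ ‖eTprod a‖ * ‖ψ‖ := norm_inner_le_norm _ _
    have he1 : ‖eTprod a‖ = 1 := by
      rw [hψ, mul_one, ← h] at hcs
      exact le_antisymm he hcs
    have h0 : eTprod a ≠ 0 := by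
      rw [← norm_ne_zero_iff, he1]; exact one_ne_zero
    have h0' : ψ ≠ 0 := by
      rw [← norm_ne_zero_iff, hψ]; exact one_ne_zero
    obtain ⟨c, -, hc⟩ := (norm_inner_eq_norm_iff (𝕜 := ℂ) h0 h0').1 (by rw [← h, he1, hψ, mul_one])
    exact sep_of_smul_aux ψ hψ hp c a hc
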